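/- Let d ≥ 1, 0 < s < 1, 1 < p < 2, and let K : ℝ^d × ℝ^d → ℝ be measurable with 0 < k_* ≤ K(x,y) ≤ k^* for a.e. (x,y). Let u, v : ℝ^d → ℝ be measurable with finite Gagliardo seminorms [u]_{s,p} < ∞ and [v]_{s,p} < ∞, not both zero. Then, as (possibly infinite) integrals of nonnegative functions, ∫_{ℝ^d}∫_{ℝ^d} K(x,y) ( |δ^s u|^{p−2} δ^s u − |δ^s v|^{p−2} δ^s v ) (δ^s u − δ^s v) |x−y|^{−d} dx dy ≥ (p − 1) 2^{(p² − 4p + 2)/p} k_* [u − v]_{s,p}² / ( [u]_{s,p} + [v]_{s,p} )^{2−p}. -/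

import Mathlib

open MeasureTheory

/-- Euclidean space `ℝ^d`. -/
abbrev Ed (d : ℕ) : Type := EuclideanSpace ℝ (Fin d)

/-- The fractional difference quotient `δ^s u(x,y) = (u(x) - u(y))/|x-y|^s`. -/
noncomputable def deltaS {d : ℕ} (s : ℝ) (u : Ed d → ℝ) (x y : Ed d) : ℝ :=
  (u x - u y) / ‖x - y‖ ^ s

/-- The `p`-th power of the Gagliardo `W^{s,p}` seminorm, as a value in `[0,∞]`. -/
noncomputable def gagliardoPow (d : ℕ) (s p : ℝ) (w : Ed d → ℝ) : ENNReal :=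
  ∫⁻ q : Ed d × Ed d, ENNReal.ofReal (|w q.1 - w q.2| ^ p / ‖q.1 - q.2‖ ^ ((d : ℝ) + s * p))

/-- The Gagliardo `W^{s,p}` seminorm `[w]_{s,p}` (finite when `gagliardoPow` is finite). -/
noncomputable def gagliardoSemi (d : ℕ) (s p : ℝ) (w : Ed d → ℝ) : ℝ :=
  (gagliardoPow d s p w).toReal ^ ((1 : ℝ) / p)

/-!
The measure `|x - y|^(-d) dx dy` turns the Gagliardo seminorm of `u` into the `L^p` norm of `δ^s u`,
so coercivity is a statement about two functions `a`, `b` in `L^p` of a measure space. Pointwise,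
the flux `‖a‖^(p-2) a` satisfies
`(p - 1) ‖a - b‖^2 ≤ ⟪‖a‖^(p-2) a - ‖b‖^(p-2) b, a - b⟫ (‖a‖ + ‖b‖)^(2-p)`:
both `‖a - b‖^2` and the inner product split into a radial part, compared by the tangent-line
inequality for the concave function `x ↦ x^(p-1)`, and a nonnegative multiple of the Cauchy-Schwarz
defect `‖a‖ ‖b‖ - ⟪a, b⟫`. Raising this to the power `p / 2` and applying Hölder's inequality with
exponents `2 / p` and `2 / (2 - p)`, then Minkowski's inequality to `‖a‖ + ‖b‖`, gives the claim
with constant `p - 1`; the factor `2^((p^2 - 4p + 2)/p) ≤ 1` is then free.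
-/

open scoped ENNReal InnerProductSpace

lemma mul_rpow_sub_one_mul_sub_le {q x y : ℝ} (hq0 : 0 ≤ q) (hq1 : q ≤ 1) (hx : 0 < x)
    (hy : 0 ≤ y) : q * x ^ (q - 1) * (x - y) ≤ x ^ q - y ^ q := by
  have bernoulli : (y / x) ^ q ≤ 1 + q * (y / x - 1) := by
    simpa using rpow_one_add_le_one_add_mul_self (s := y / x - 1)
      (by linarith [div_nonneg hy hx.le]) hq0 hq1
  have hxq : 0 < x ^ q := by positivity
  rw [Real.div_rpow hy hx.le, div_le_iff₀ hxq] at bernoulli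
  have slope : q * x ^ (q - 1) * (x - y) = -(q * (y / x - 1)) * x ^ q := by
    rw [Real.rpow_sub_one hx.ne']
    field_simp
    ring
  linarith

lemma mul_rpow_add_mul_sub_sq_le {p x y : ℝ} (hp1 : 1 ≤ p) (hp2 : p ≤ 2) (hx : 0 ≤ x)
    (hy : 0 ≤ y) :
    (p - 1) * (x + y) ^ (p - 2) * (x - y) ^ 2 ≤ (x ^ (p - 1) - y ^ (p - 1)) * (x - y) := by
  wlog hyx : y ≤ x generalizing x y
  · have h := this hy hx (le_of_not_ge hyx)
    rw [add_comm y x] at h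
    linarith
  rcases hx.eq_or_lt with rfl | hx'
  · simp [le_antisymm hyx hy]
  have hp : 0 ≤ p - 1 := by linarith
  have : 0 ≤ x - y := by linarith
  have weight : (x + y) ^ (p - 2) ≤ x ^ (p - 2) :=
    Real.rpow_le_rpow_of_nonpos hx' (by linarith) (by linarith)
  have tangent := mul_rpow_sub_one_mul_sub_le hp (by linarith) hx' hy
  rw [show p - 1 - 1 = p - 2 by ring] at tangent
  calc (p - 1) * (x + y) ^ (p - 2) * (x - y) ^ 2
      ≤ (p - 1) * x ^ (p - 2) * (x - y) ^ 2 := by gcongr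
    _ = (p - 1) * x ^ (p - 2) * (x - y) * (x - y) := by ring
    _ ≤ (x ^ (p - 1) - y ^ (p - 1)) * (x - y) := by gcongr

lemma two_rpow_le_one {p : ℝ} (hp1 : 1 ≤ p) (hp3 : p ≤ 3) :
    (2 : ℝ) ^ ((p ^ 2 - 4 * p + 2) / p) ≤ 1 :=
  Real.rpow_le_one_of_one_le_of_nonpos one_le_two
    (div_nonpos_of_nonpos_of_nonneg (by nlinarith) (by linarith))

lemma sub_one_mul_two_rpow_mul_le {p k : ℝ} (hp1 : 1 ≤ p) (hp3 : p ≤ 3) (hk : 0 ≤ k) :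
    (p - 1) * (2 : ℝ) ^ ((p ^ 2 - 4 * p + 2) / p) * k ≤ (p - 1) * k := by
  have hp : 0 ≤ p - 1 := by linarith
  gcongr
  exact mul_le_of_le_one_right hp (two_rpow_le_one hp1 hp3)

section Flux

variable {E : Type*} [NormedAddCommGroup E] [InnerProductSpace ℝ E]

/-- The nonlinearity `a ↦ ‖a‖^(p-2) a` of the `p`-Laplacian, the gradient of `‖a‖^p / p`. It
vanishes at `a = 0` whatever the value of `0 ^ (p - 2)`. -/
noncomputable def pFlux (p : ℝ) (a : E) : E := ‖a‖ ^ (p - 2) • a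

lemma inner_pFlux_sub_pFlux {p : ℝ} (hp : p ≠ 1) (a b : E) :
    ⟪pFlux p a - pFlux p b, a - b⟫_ℝ =
      (‖a‖ ^ (p - 1) - ‖b‖ ^ (p - 1)) * (‖a‖ - ‖b‖) +
        (‖a‖ ^ (p - 2) + ‖b‖ ^ (p - 2)) * (‖a‖ * ‖b‖ - ⟪a, b⟫_ℝ) := by
  have split (c : E) : ‖c‖ ^ (p - 1) = ‖c‖ ^ (p - 2) * ‖c‖ := by
    rw [← Real.rpow_add_one' (norm_nonneg c) (by contrapose! hp; linarith)]
    ring_nf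
  simp only [pFlux, inner_sub_left, inner_sub_right, real_inner_smul_left,
    real_inner_self_eq_norm_sq, real_inner_comm a b, split]
  ring

lemma norm_sub_sq_eq_sub_norm_sq_add (a b : E) :
    ‖a - b‖ ^ 2 = (‖a‖ - ‖b‖) ^ 2 + 2 * (‖a‖ * ‖b‖ - ⟪a, b⟫_ℝ) := by
  rw [norm_sub_sq_real]
  ring

lemma two_mul_rpow_add_mul_inner_defect_le {p : ℝ} (hp : p ≤ 2) (a b : E) :
    2 * (‖a‖ + ‖b‖) ^ (p - 2) * (‖a‖ * ‖b‖ - ⟪a, b⟫_ℝ) ≤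
      (‖a‖ ^ (p - 2) + ‖b‖ ^ (p - 2)) * (‖a‖ * ‖b‖ - ⟪a, b⟫_ℝ) := by
  rcases eq_or_ne a 0 with rfl | ha
  · simp
  rcases eq_or_ne b 0 with rfl | hb
  · simp
  have weight_a : (‖a‖ + ‖b‖) ^ (p - 2) ≤ ‖a‖ ^ (p - 2) :=
    Real.rpow_le_rpow_of_nonpos (norm_pos_iff.2 ha) (by simp) (by linarith)
  have weight_b : (‖a‖ + ‖b‖) ^ (p - 2) ≤ ‖b‖ ^ (p - 2) :=
    Real.rpow_le_rpow_of_nonpos (norm_pos_iff.2 hb) (by simp) (by linarith)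
  exact mul_le_mul_of_nonneg_right (by linarith) (sub_nonneg.2 (real_inner_le_norm a b))

lemma mul_rpow_mul_norm_sub_sq_le_inner_pFlux {p : ℝ} (hp1 : 1 < p) (hp2 : p ≤ 2) (a b : E) :
    (p - 1) * (‖a‖ + ‖b‖) ^ (p - 2) * ‖a - b‖ ^ 2 ≤ ⟪pFlux p a - pFlux p b, a - b⟫_ℝ := by
  have radial := mul_rpow_add_mul_sub_sq_le hp1.le hp2 (norm_nonneg a) (norm_nonneg b)
  have angular := two_mul_rpow_add_mul_inner_defect_le hp2 a b
  have defect_nonneg : 0 ≤ ‖a‖ * ‖b‖ - ⟪a, b⟫_ℝ := sub_nonneg.2 (real_inner_le_norm a b)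
  have angular' : (p - 1) * (2 * (‖a‖ + ‖b‖) ^ (p - 2) * (‖a‖ * ‖b‖ - ⟪a, b⟫_ℝ)) ≤
      2 * (‖a‖ + ‖b‖) ^ (p - 2) * (‖a‖ * ‖b‖ - ⟪a, b⟫_ℝ) :=
    mul_le_of_le_one_left (by positivity) (by linarith)
  rw [inner_pFlux_sub_pFlux hp1.ne', norm_sub_sq_eq_sub_norm_sq_add]
  linarith

lemma inner_pFlux_nonneg {p : ℝ} (hp1 : 1 < p) (hp2 : p ≤ 2) (a b : E) :
    0 ≤ ⟪pFlux p a - pFlux p b, a - b⟫_ℝ := by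
  have : 0 ≤ p - 1 := by linarith
  exact le_trans (by positivity) (mul_rpow_mul_norm_sub_sq_le_inner_pFlux hp1 hp2 a b)

lemma mul_norm_sub_sq_le_inner_pFlux_mul {p : ℝ} (hp1 : 1 < p) (hp2 : p ≤ 2) (a b : E) :
    (p - 1) * ‖a - b‖ ^ 2 ≤ ⟪pFlux p a - pFlux p b, a - b⟫_ℝ * (‖a‖ + ‖b‖) ^ (2 - p) := by
  rcases (add_nonneg (norm_nonneg a) (norm_nonneg b)).eq_or_lt with h | h
  · obtain rfl : a = 0 := norm_eq_zero.1 (by linarith [norm_nonneg a, norm_nonneg b])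
    obtain rfl : b = 0 := norm_eq_zero.1 (by simpa using h.symm)
    simp
  · have cancel : (‖a‖ + ‖b‖) ^ (p - 2) * (‖a‖ + ‖b‖) ^ (2 - p) = 1 := by
      rw [← Real.rpow_add h]
      simp
    calc (p - 1) * ‖a - b‖ ^ 2
        = (p - 1) * (‖a‖ + ‖b‖) ^ (p - 2) * ‖a - b‖ ^ 2 * (‖a‖ + ‖b‖) ^ (2 - p) := by
          linear_combination (-(p - 1) * ‖a - b‖ ^ 2) * cancel
      _ ≤ _ := by
          gcongr
          exact mul_rpow_mul_norm_sub_sq_le_inner_pFlux hp1 hp2 a b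

lemma mul_enorm_sub_sq_le_inner_pFlux_mul {p : ℝ} (hp1 : 1 < p) (hp2 : p ≤ 2) (a b : E) :
    ENNReal.ofReal (p - 1) * ‖a - b‖ₑ ^ 2 ≤
      ENNReal.ofReal ⟪pFlux p a - pFlux p b, a - b⟫_ℝ * (‖a‖ₑ + ‖b‖ₑ) ^ (2 - p) := by
  simp only [← ofReal_norm]
  rw [← ENNReal.ofReal_add (norm_nonneg a) (norm_nonneg b),
    ENNReal.ofReal_rpow_of_nonneg (by positivity) (by linarith),
    ← ENNReal.ofReal_pow (norm_nonneg _), ← ENNReal.ofReal_mul (by linarith),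
    ← ENNReal.ofReal_mul (inner_pFlux_nonneg hp1 hp2 a b)]
  exact ENNReal.ofReal_le_ofReal (mul_norm_sub_sq_le_inner_pFlux_mul hp1 hp2 a b)

end Flux

lemma inner_pFlux_sub_pFlux_eq_mul (p a b : ℝ) :
    ⟪pFlux p a - pFlux p b, a - b⟫_ℝ = (|a| ^ (p - 2) * a - |b| ^ (p - 2) * b) * (a - b) := by
  simp only [pFlux, Real.norm_eq_abs, smul_eq_mul, RCLike.inner_apply, conj_trivial, mul_comm]

section Lp

variable {α : Type*} [MeasurableSpace α] {μ : Measure α}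

lemma mul_lintegral_rpow_le_lintegral_mul {p : ℝ} (hp0 : 0 < p) (hp2 : p ≤ 2) {c : ℝ≥0∞}
    {f g h : α → ℝ≥0∞} (hg : AEMeasurable g μ) (hh : AEMeasurable h μ)
    (hfgh : ∀ᵐ x ∂μ, c * f x ^ 2 ≤ g x * h x ^ (2 - p)) :
    c * (∫⁻ x, f x ^ p ∂μ) ^ (2 / p) ≤
      (∫⁻ x, g x ∂μ) * (∫⁻ x, h x ^ p ∂μ) ^ ((2 - p) / p) := by
  have pointwise : ∀ᵐ x ∂μ,
      c ^ (p / 2) * f x ^ p ≤ g x ^ (p / 2) * (h x ^ p) ^ ((2 - p) / 2) := by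
    filter_upwards [hfgh] with x hx
    have hpow := ENNReal.rpow_le_rpow hx (by positivity : 0 ≤ p / 2)
    rw [ENNReal.mul_rpow_of_nonneg _ _ (by positivity),
      ENNReal.mul_rpow_of_nonneg _ _ (by positivity), ← ENNReal.rpow_two, ← ENNReal.rpow_mul,
      ← ENNReal.rpow_mul] at hpow
    rw [← ENNReal.rpow_mul]
    convert hpow using 3 <;> ring
  have holder : c ^ (p / 2) * ∫⁻ x, f x ^ p ∂μ ≤
      (∫⁻ x, g x ∂μ) ^ (p / 2) * (∫⁻ x, h x ^ p ∂μ) ^ ((2 - p) / 2) :=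
    calc c ^ (p / 2) * ∫⁻ x, f x ^ p ∂μ
        ≤ ∫⁻ x, c ^ (p / 2) * f x ^ p ∂μ := lintegral_const_mul_le _ _
      _ ≤ ∫⁻ x, g x ^ (p / 2) * (h x ^ p) ^ ((2 - p) / 2) ∂μ := lintegral_mono_ae pointwise
      _ ≤ _ := ENNReal.lintegral_mul_norm_pow_le hg (hh.pow_const p) (by positivity)
        (by linarith) (by ring)
  have hpow := ENNReal.rpow_le_rpow holder (by positivity : 0 ≤ 2 / p)
  have cancel : p / 2 * (2 / p) = 1 := by field_simp
  have exponent : (2 - p) / 2 * (2 / p) = (2 - p) / p := by field_simp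
  rwa [ENNReal.mul_rpow_of_nonneg _ _ (by positivity),
    ENNReal.mul_rpow_of_nonneg _ _ (by positivity), ← ENNReal.rpow_mul, ← ENNReal.rpow_mul,
    ← ENNReal.rpow_mul, cancel, exponent, ENNReal.rpow_one, ENNReal.rpow_one] at hpow

lemma eLpNorm_ofReal_eq_lintegral_rpow {ε : Type*} [ENorm ε] {p : ℝ} (hp : 0 < p) (f : α → ε) :
    eLpNorm f (ENNReal.ofReal p) μ = (∫⁻ x, ‖f x‖ₑ ^ p ∂μ) ^ (1 / p) := by
  rw [eLpNorm_eq_lintegral_rpow_enorm_toReal (by simpa using hp) ENNReal.ofReal_ne_top,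
    ENNReal.toReal_ofReal hp.le]

variable {E : Type*} [NormedAddCommGroup E] [InnerProductSpace ℝ E] {p : ℝ} {a b : α → E}

lemma aestronglyMeasurable_pFlux (ha : AEStronglyMeasurable a μ) :
    AEStronglyMeasurable (fun x => pFlux p (a x)) μ :=
  (ha.norm.aemeasurable.pow_const (p - 2)).aestronglyMeasurable.smul ha

theorem mul_eLpNorm_sub_sq_le_lintegral_inner_pFlux_mul (hp1 : 1 < p) (hp2 : p ≤ 2)
    (ha : AEStronglyMeasurable a μ) (hb : AEStronglyMeasurable b μ) :
    ENNReal.ofReal (p - 1) * eLpNorm (fun x => a x - b x) (ENNReal.ofReal p) μ ^ 2 ≤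
      (∫⁻ x, ENNReal.ofReal ⟪pFlux p (a x) - pFlux p (b x), a x - b x⟫_ℝ ∂μ) *
        (eLpNorm a (ENNReal.ofReal p) μ + eLpNorm b (ENNReal.ofReal p) μ) ^ (2 - p) := by
  have hp : 0 < p := by linarith
  have pairing_meas : AEMeasurable
      (fun x => ENNReal.ofReal ⟪pFlux p (a x) - pFlux p (b x), a x - b x⟫_ℝ) μ :=
    (((aestronglyMeasurable_pFlux ha).sub (aestronglyMeasurable_pFlux hb)).inner
      (ha.sub hb)).aemeasurable.ennreal_ofReal
  have holder := mul_lintegral_rpow_le_lintegral_mul hp hp2 pairing_meas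
    (ha.enorm.add hb.enorm)
    (ae_of_all _ fun x => mul_enorm_sub_sq_le_inner_pFlux_mul hp1 hp2 (a x) (b x))
  have minkowski : (∫⁻ x, (‖a x‖ₑ + ‖b x‖ₑ) ^ p ∂μ) ^ (1 / p) ≤
      eLpNorm a (ENNReal.ofReal p) μ + eLpNorm b (ENNReal.ofReal p) μ := by
    simp only [eLpNorm_ofReal_eq_lintegral_rpow hp]
    exact ENNReal.lintegral_Lp_add_le ha.enorm hb.enorm hp1.le
  rw [eLpNorm_ofReal_eq_lintegral_rpow hp, ← ENNReal.rpow_two, ← ENNReal.rpow_mul,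
    one_div_mul_eq_div]
  refine holder.trans ?_
  rw [← one_div_mul_eq_div p (2 - p), ENNReal.rpow_mul]
  gcongr
  exact minkowski

end Lp

section Gagliardo

variable {d : ℕ}

/-- The measure `|x - y|^(-d) dx dy` on pairs of points: the Gagliardo seminorm `[w]_{s,p}` is the
`L^p` norm of `δ^s w` with respect to it. On the diagonal the density is the junk value `0` (for
`d ≠ 0`), which is harmless because `δ^s w` vanishes there. -/
noncomputable def gagliardoMeasure (d : ℕ) : Measure (Ed d × Ed d) :=
  volume.withDensity fun q => ENNReal.ofReal (‖q.1 - q.2‖ ^ (d : ℝ))⁻¹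

lemma lintegral_gagliardoMeasure (f : Ed d × Ed d → ℝ) :
    ∫⁻ q, ENNReal.ofReal (f q) ∂gagliardoMeasure d =
      ∫⁻ q, ENNReal.ofReal (f q / ‖q.1 - q.2‖ ^ (d : ℝ)) := by
  rw [gagliardoMeasure, lintegral_withDensity_eq_lintegral_mul_non_measurable _ (by fun_prop)
    (by simp)]
  refine lintegral_congr fun q => ?_
  rw [Pi.mul_apply, ← ENNReal.ofReal_mul (by positivity), mul_comm, div_eq_mul_inv]

lemma aestronglyMeasurable_deltaS (s : ℝ) {w : Ed d → ℝ} (hw : AEMeasurable w) :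
    AEStronglyMeasurable (fun q : Ed d × Ed d => deltaS s w q.1 q.2) (gagliardoMeasure d) := by
  have hdiff : AEMeasurable (fun q : Ed d × Ed d => w q.1 - w q.2) :=
    (hw.comp_quasiMeasurePreserving Measure.quasiMeasurePreserving_fst).sub
      (hw.comp_quasiMeasurePreserving Measure.quasiMeasurePreserving_snd)
  have hdelta : AEMeasurable (fun q : Ed d × Ed d => deltaS s w q.1 q.2) :=
    hdiff.div (by fun_prop)
  exact hdelta.aestronglyMeasurable.mono_ac (withDensity_absolutelyContinuous _ _)

lemma abs_deltaS_rpow_div (s : ℝ) {p : ℝ} (hp : p ≠ 0) (w : Ed d → ℝ) (x y : Ed d) :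
    |deltaS s w x y| ^ p / ‖x - y‖ ^ (d : ℝ) = |w x - w y| ^ p / ‖x - y‖ ^ ((d : ℝ) + s * p) := by
  rcases eq_or_ne x y with rfl | hxy
  · simp [deltaS, Real.zero_rpow hp]
  have hr : 0 < ‖x - y‖ := norm_pos_iff.2 (sub_ne_zero.2 hxy)
  rw [deltaS, abs_div, abs_of_pos (by positivity : 0 < ‖x - y‖ ^ s),
    Real.div_rpow (abs_nonneg _) (by positivity), ← Real.rpow_mul hr.le, div_div,
    ← Real.rpow_add hr, add_comm]

lemma eLpNorm_deltaS (s : ℝ) {p : ℝ} (hp : 0 < p) (w : Ed d → ℝ) :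
    eLpNorm (fun q : Ed d × Ed d => deltaS s w q.1 q.2) (ENNReal.ofReal p) (gagliardoMeasure d) =
      gagliardoPow d s p w ^ (1 / p) := by
  simp only [eLpNorm_ofReal_eq_lintegral_rpow hp, Real.enorm_eq_ofReal_abs,
    ENNReal.ofReal_rpow_of_nonneg (abs_nonneg _) hp.le, lintegral_gagliardoMeasure,
    abs_deltaS_rpow_div s hp.ne', gagliardoPow]

lemma deltaS_sub (s : ℝ) (u v : Ed d → ℝ) (x y : Ed d) :
    deltaS s (fun z => u z - v z) x y = deltaS s u x y - deltaS s v x y := by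
  simp only [deltaS]
  ring

lemma gagliardoSemi_nonneg (s p : ℝ) (w : Ed d → ℝ) : 0 ≤ gagliardoSemi d s p w :=
  Real.rpow_nonneg ENNReal.toReal_nonneg _

lemma gagliardoSemi_eq_toReal (s p : ℝ) (w : Ed d → ℝ) :
    gagliardoSemi d s p w = (gagliardoPow d s p w ^ (1 / p)).toReal :=
  ENNReal.toReal_rpow _ _

lemma ofReal_gagliardoSemi {s p : ℝ} (hp : 0 ≤ p) {w : Ed d → ℝ}
    (hw : gagliardoPow d s p w ≠ ⊤) :
    ENNReal.ofReal (gagliardoSemi d s p w) = gagliardoPow d s p w ^ (1 / p) := by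
  rw [gagliardoSemi_eq_toReal,
    ENNReal.ofReal_toReal (ENNReal.rpow_ne_top_of_nonneg (by positivity) hw)]

/-- The pairing `⟨𝓛_p^s u - 𝓛_p^s v, u - v⟩` for the anisotropic fractional `p`-Laplacian with
kernel `K`, as a value in `[0,∞]`; the integrand is nonnegative for `K ≥ 0` and `1 < p`. -/
noncomputable def pLaplacianPairing (s p : ℝ) (K : Ed d → Ed d → ℝ) (u v : Ed d → ℝ) : ℝ≥0∞ :=
  ∫⁻ q : Ed d × Ed d,
    ENNReal.ofReal (K q.1 q.2 *
      ((|deltaS s u q.1 q.2| ^ (p - 2) * deltaS s u q.1 q.2 -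
        |deltaS s v q.1 q.2| ^ (p - 2) * deltaS s v q.1 q.2) *
        (deltaS s u q.1 q.2 - deltaS s v q.1 q.2)) / ‖q.1 - q.2‖ ^ (d : ℝ))

variable {s p k : ℝ} {K : Ed d → Ed d → ℝ} {u v : Ed d → ℝ}

lemma mul_lintegral_inner_pFlux_le_pLaplacianPairing (hp1 : 1 < p) (hp2 : p ≤ 2)
    (hK : ∀ᵐ q : Ed d × Ed d, k ≤ K q.1 q.2) :
    ENNReal.ofReal k * ∫⁻ q, ENNReal.ofReal
        ⟪pFlux p (deltaS s u q.1 q.2) - pFlux p (deltaS s v q.1 q.2),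
          deltaS s u q.1 q.2 - deltaS s v q.1 q.2⟫_ℝ ∂gagliardoMeasure d ≤
      pLaplacianPairing s p K u v := by
  rw [pLaplacianPairing, ← lintegral_gagliardoMeasure, ← lintegral_const_mul' _ _
    ENNReal.ofReal_ne_top]
  have hK' : ∀ᵐ q ∂gagliardoMeasure d, k ≤ K q.1 q.2 :=
    (withDensity_absolutelyContinuous _ _).ae_le hK
  refine lintegral_mono_ae (hK'.mono fun q hq => ?_)
  simp only [← inner_pFlux_sub_pFlux_eq_mul]
  rw [ENNReal.ofReal_mul' (inner_pFlux_nonneg hp1 hp2 _ _)]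
  gcongr

theorem mul_gagliardoPow_sub_le_pLaplacianPairing_mul (hp1 : 1 < p) (hp2 : p ≤ 2)
    (hK : ∀ᵐ q : Ed d × Ed d, k ≤ K q.1 q.2) (hu : AEMeasurable u) (hv : AEMeasurable v) :
    ENNReal.ofReal ((p - 1) * k) * (gagliardoPow d s p (fun z => u z - v z) ^ (1 / p)) ^ 2 ≤
      pLaplacianPairing s p K u v *
        (gagliardoPow d s p u ^ (1 / p) + gagliardoPow d s p v ^ (1 / p)) ^ (2 - p) := by
  have hp : 0 < p := by linarith
  have coercive := mul_eLpNorm_sub_sq_le_lintegral_inner_pFlux_mul hp1 hp2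
    (aestronglyMeasurable_deltaS s hu) (aestronglyMeasurable_deltaS s hv)
  have norm_sub : eLpNorm (fun q : Ed d × Ed d => deltaS s u q.1 q.2 - deltaS s v q.1 q.2)
      (ENNReal.ofReal p) (gagliardoMeasure d) =
        gagliardoPow d s p (fun z => u z - v z) ^ (1 / p) := by
    simp only [← deltaS_sub, eLpNorm_deltaS s hp]
  rw [norm_sub, eLpNorm_deltaS s hp, eLpNorm_deltaS s hp] at coercive
  rw [mul_comm (p - 1), ENNReal.ofReal_mul' (by linarith), mul_assoc]
  grw [coercive, ← mul_assoc, mul_lintegral_inner_pFlux_le_pLaplacianPairing hp1 hp2 hK]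

theorem pLaplacian_coercivity_singular_general (hp1 : 1 < p) (hp2 : p ≤ 2)
    (hK : ∀ᵐ q : Ed d × Ed d, k ≤ K q.1 q.2) (hu : AEMeasurable u) (hv : AEMeasurable v)
    (hfinu : gagliardoPow d s p u ≠ ⊤) (hfinv : gagliardoPow d s p v ≠ ⊤)
    (hnz : ¬ (gagliardoSemi d s p u = 0 ∧ gagliardoSemi d s p v = 0)) :
    ENNReal.ofReal ((p - 1) * k * gagliardoSemi d s p (fun z => u z - v z) ^ 2 /
        (gagliardoSemi d s p u + gagliardoSemi d s p v) ^ (2 - p)) ≤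
      pLaplacianPairing s p K u v := by
  have hp : 0 < p := by linarith
  have hu0 := gagliardoSemi_nonneg s p u
  have hv0 := gagliardoSemi_nonneg s p v
  have sum_pos : 0 < gagliardoSemi d s p u + gagliardoSemi d s p v :=
    (add_nonneg hu0 hv0).lt_of_ne' fun h => hnz ((add_eq_zero_iff_of_nonneg hu0 hv0).1 h)
  rw [ENNReal.ofReal_div_of_pos (by positivity), ENNReal.ofReal_mul' (by positivity),
    ENNReal.ofReal_pow (gagliardoSemi_nonneg s p _), ← ENNReal.ofReal_rpow_of_pos sum_pos,
    ENNReal.ofReal_add hu0 hv0, ofReal_gagliardoSemi hp.le hfinu,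
    ofReal_gagliardoSemi hp.le hfinv]
  refine ENNReal.div_le_of_le_mul (le_trans ?_
    (mul_gagliardoPow_sub_le_pLaplacianPairing_mul hp1 hp2 hK hu hv))
  rw [gagliardoSemi_eq_toReal]
  gcongr
  exact ENNReal.ofReal_toReal_le

end Gagliardo

/-- Coercivity of the anisotropic fractional p-Laplacian for `1 < p < 2`: for `u, v` with
finite `W^{s,p}` seminorms, not both zero,
`⟨𝓛_p^s u - 𝓛_p^s v, u - v⟩ ≥ (p-1) 2^{(p²-4p+2)/p} k_* [u-v]²_{s,p} / ([u]_{s,p} + [v]_{s,p})^{2-p}`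
as integrals of nonnegative functions. -/
theorem pLaplacian_coercivity_singular
    (d : ℕ) (hd : 1 ≤ d) (s : ℝ) (hs0 : 0 < s) (hs1 : s < 1)
    (p : ℝ) (hp1 : 1 < p) (hp2 : p < 2) (ks kS : ℝ) (hks : 0 < ks) (hksS : ks ≤ kS)
    (K : Ed d → Ed d → ℝ)
    (hKmeas : Measurable (fun q : Ed d × Ed d => K q.1 q.2))
    (hKbdd : ∀ᵐ q : Ed d × Ed d, ks ≤ K q.1 q.2 ∧ K q.1 q.2 ≤ kS)
    (u v : Ed d → ℝ) (hu : Measurable u) (hv : Measurable v)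
    (hfinu : gagliardoPow d s p u ≠ ⊤) (hfinv : gagliardoPow d s p v ≠ ⊤)
    (hnz : ¬ (gagliardoSemi d s p u = 0 ∧ gagliardoSemi d s p v = 0)) :
    ENNReal.ofReal ((p - 1) * (2 : ℝ) ^ ((p ^ 2 - 4 * p + 2) / p) * ks *
        (gagliardoSemi d s p (fun z => u z - v z)) ^ 2 /
        (gagliardoSemi d s p u + gagliardoSemi d s p v) ^ (2 - p)) ≤
      ∫⁻ q : Ed d × Ed d,
        ENNReal.ofReal (K q.1 q.2 *
          ((|deltaS s u q.1 q.2| ^ (p - 2) * deltaS s u q.1 q.2 -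
            |deltaS s v q.1 q.2| ^ (p - 2) * deltaS s v q.1 q.2) *
            (deltaS s u q.1 q.2 - deltaS s v q.1 q.2)) / ‖q.1 - q.2‖ ^ (d : ℝ)) := by
  have hsum := add_nonneg (gagliardoSemi_nonneg s p u) (gagliardoSemi_nonneg s p v)
  grw [sub_one_mul_two_rpow_mul_le hp1.le (by linarith) hks.le]
  exact pLaplacian_coercivity_singular_general hp1 hp2.le (hKbdd.mono fun _ h => h.1)
    hu.aemeasurable hv.aemeasurable hfinu hfinv hnz
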